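/- Let K be a field of characteristic zero, let q : ĝ → g be a surjective homomorphism of Lie algebras over K with kernel n, let V be a K-vector space equipped with a bilinear map m_V : V × V → V, and let σ : g → ĝ be a linear section of q. Then for every symmetric p-linear map f : n^p → V and every symmetric q-linear map h : n^q → V one has (1/(p+q)!) · (f ∨_{m_V} h)_σ = ((1/p!) · f_σ) ∧_{m_V} ((1/q!) · h_σ); equivalently, (f ∨_{m_V} h)_σ = ((p+q)!/(p!·q!)) · (f_σ ∧_{m_V} h_σ). In particular the Chern–Weil map f ↦ (1/p!)[f_σ] is multiplicative (the cochain-level form of part (b) of Lecomte's theorem). -/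

import Mathlib

open scoped BigOperators

/-- The curvature `R_σ(x,y) = ⁅σ x, σ y⁆ - σ ⁅x,y⁆` of a linear section `σ` of `π`, as an
element of the kernel `n = ker π`. -/
def curvKer {K g gh : Type*} [Field K] [LieRing g] [LieAlgebra K g]
    [LieRing gh] [LieAlgebra K gh]
    (π : gh →ₗ⁅K⁆ g) (σ : g →ₗ[K] gh) (hσ : ∀ x, π (σ x) = x) (x y : g) :
    π.ker :=
  ⟨⁅σ x, σ y⁆ - σ ⁅x, y⁆, by
    rw [LieHom.mem_ker]
    simp [hσ]⟩

/-- The wedge product of `V`-valued cochains relative to a multiplication `m` on `V`.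
The total arity `a` is passed together with a proof `a = p + q`. -/
noncomputable def wedgeC {K g V : Type*} [Field K] [AddCommGroup V] [Module K V]
    (p q a : ℕ) (ha : a = p + q) (m : V → V → V)
    (α : (Fin p → g) → V) (β : (Fin q → g) → V) :
    (Fin a → g) → V :=
  fun x => (((p.factorial * q.factorial : ℕ) : K))⁻¹ •
    ∑ τ : Equiv.Perm (Fin a),
      ((Equiv.Perm.sign τ : ℤ)) •
        m (α (fun s : Fin p => x (τ ⟨(s : ℕ), by have := s.isLt; omega⟩)))
          (β (fun s : Fin q => x (τ ⟨p + (s : ℕ), by have := s.isLt; omega⟩)))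

/-- The symmetric product `(f ∨_m h)(y₁,…,y_{p+q}) = (1/(p!q!)) Σ_{τ ∈ S_{p+q}}
m(f(y_{τ(1)},…,y_{τ(p)}), h(y_{τ(p+1)},…,y_{τ(p+q)}))` of symmetric multilinear maps. -/
noncomputable def veeC {K N V : Type*} [Field K] [AddCommGroup V] [Module K V]
    (p q : ℕ) (m : V → V → V)
    (f : (Fin p → N) → V) (h : (Fin q → N) → V) :
    (Fin (p + q) → N) → V :=
  fun y => (((p.factorial * q.factorial : ℕ) : K))⁻¹ •
    ∑ τ : Equiv.Perm (Fin (p + q)),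
      m (f (fun s : Fin p => y (τ ⟨(s : ℕ), by have := s.isLt; omega⟩)))
        (h (fun s : Fin q => y (τ ⟨p + (s : ℕ), by have := s.isLt; omega⟩)))

/-- The Chern–Weil cochain attached to a `p`-linear map `f : n^p → V` and a linear
section `σ` of `π`.  The arity `a` is passed along with a proof `a = 2*p`. -/
noncomputable def chernWeilF {K g gh V : Type*} [Field K] [LieRing g] [LieAlgebra K g]
    [LieRing gh] [LieAlgebra K gh] [AddCommGroup V] [Module K V]
    (π : gh →ₗ⁅K⁆ g) (p a : ℕ) (ha : a = 2 * p)
    (σ : g →ₗ[K] gh) (hσ : ∀ x, π (σ x) = x)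
    (f : (Fin p → π.ker) → V) :
    (Fin a → g) → V :=
  fun x => ((2 : K) ^ p)⁻¹ •
    ∑ τ : Equiv.Perm (Fin a),
      ((Equiv.Perm.sign τ : ℤ)) •
        f (fun s : Fin p =>
          curvKer π σ hσ
            (x (τ ⟨2 * (s : ℕ), by have := s.isLt; omega⟩))
            (x (τ ⟨2 * (s : ℕ) + 1, by have := s.isLt; omega⟩)))

/-! The curvatures turn `f` into the function `x ↦ f(R(x₁,x₂),…,R(x_{2p-1},x_{2p}))`, and both sides
of the identity are alternatizations built from the product of two such functions. Averaging a
function over permutations of its arguments, weighted by their signs, does not change its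
alternatization. On the left, the sum over `S_{p+q}` in the symmetric product permutes blocks of
length two, and such permutations are even. On the right, the inner alternatizations are sums over
`S_{2p} × S_{2q} ⊆ S_{2p+2q}`. Thus both sides are multiples of the same alternatization, and it
remains to compare the coefficients. -/

section Alternatize

open Equiv

variable {ι X V : Type*} [Fintype ι] [DecidableEq ι] [AddCommGroup V]

/-- The alternatization `x ↦ ∑ τ, sign τ • F (x ∘ τ)` of an arbitrary function of a family of
variables, without the normalizing factor `1 / |ι|!`. For multilinear `F` it is
`MultilinearMap.alternatization`. -/
def alternatize (F : (ι → X) → V) (x : ι → X) : V :=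
  ∑ τ : Perm ι, (Perm.sign τ : ℤ) • F (x ∘ τ)

theorem alternatize_smul {K : Type*} [Semiring K] [Module K V] (k : K) (F : (ι → X) → V) :
    alternatize (k • F) = k • alternatize F := by
  funext x
  simp only [alternatize, Pi.smul_apply, Finset.smul_sum, smul_comm k]

theorem alternatize_sum {J : Type*} (s : Finset J) (F : J → (ι → X) → V) :
    alternatize (∑ j ∈ s, F j) = ∑ j ∈ s, alternatize (F j) := by
  funext x
  simp only [alternatize, Finset.sum_apply, Finset.smul_sum]
  exact Finset.sum_comm

theorem sign_smul_alternatize_comp_perm (F : (ι → X) → V) (c : Perm ι) :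
    (Perm.sign c : ℤ) • alternatize (fun y => F (y ∘ c)) = alternatize F := by
  funext x
  simp only [alternatize, Pi.smul_apply, Finset.smul_sum]
  refine Fintype.sum_equiv (Equiv.mulRight c) _ _ fun τ => ?_
  simp only [smul_smul, coe_mulRight, Perm.sign_mul, Units.val_mul, mul_comm (Perm.sign c : ℤ),
    Perm.coe_mul, Function.comp_assoc]

theorem alternatize_sum_sign_smul_comp_perm {J : Type*} [Fintype J] (F : (ι → X) → V)
    (c : J → Perm ι) :
    alternatize (∑ j, (Perm.sign (c j) : ℤ) • fun y => F (y ∘ c j)) =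
      Fintype.card J • alternatize F := by
  simp only [alternatize_sum, alternatize_smul, sign_smul_alternatize_comp_perm, Finset.sum_const,
    Finset.card_univ]

end Alternatize

section ExternalProduct

variable {K X V₁ V₂ V : Type*} [CommSemiring K] [AddCommMonoid V₁] [Module K V₁]
  [AddCommMonoid V₂] [Module K V₂] [AddCommMonoid V] [Module K V]

/-- The external product `(y₁,…,y_{m+n}) ↦ μ(F(y₁,…,y_m), G(y_{m+1},…,y_{m+n}))`, of which the
wedge product and the symmetric product are the (normalized) signed and unsigned sums over
permutations of the variables. -/
def externalProduct {m n : ℕ} (μ : V₁ →ₗ[K] V₂ →ₗ[K] V) (F : (Fin m → X) → V₁)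
    (G : (Fin n → X) → V₂) (y : Fin (m + n) → X) : V :=
  μ (F (y ∘ Fin.castAdd n)) (G (y ∘ Fin.natAdd m))

theorem externalProduct_smul_smul {m n : ℕ} (μ : V₁ →ₗ[K] V₂ →ₗ[K] V) (k l : K)
    (F : (Fin m → X) → V₁) (G : (Fin n → X) → V₂) :
    externalProduct μ (k • F) (l • G) = (k * l) • externalProduct μ F G := by
  funext y
  simp only [externalProduct, Pi.smul_apply, map_smul, LinearMap.smul_apply, smul_smul,
    mul_comm k l]

end ExternalProduct

section YoungSubgroup

open Equiv

/-- The Young subgroup embedding `S_m × S_n → S_{m+n}`, through which permutations of the arguments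
of the two factors act on an external product. -/
def finSumPerm {m n : ℕ} (a : Perm (Fin m)) (b : Perm (Fin n)) : Perm (Fin (m + n)) :=
  finSumFinEquiv.permCongr (Perm.sumCongr a b)

theorem sign_finSumPerm {m n : ℕ} (a : Perm (Fin m)) (b : Perm (Fin n)) :
    Perm.sign (finSumPerm a b) = Perm.sign a * Perm.sign b := by
  rw [finSumPerm, Perm.sign_permCongr, Perm.sign_sumCongr]

theorem finSumPerm_comp_castAdd {m n : ℕ} (a : Perm (Fin m)) (b : Perm (Fin n)) :
    finSumPerm a b ∘ Fin.castAdd n = Fin.castAdd n ∘ a := by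
  funext i
  simp [finSumPerm]

theorem finSumPerm_comp_natAdd {m n : ℕ} (a : Perm (Fin m)) (b : Perm (Fin n)) :
    finSumPerm a b ∘ Fin.natAdd m = Fin.natAdd m ∘ b := by
  funext i
  simp [finSumPerm]

end YoungSubgroup

section AlternatizeExternalProduct

open Equiv

variable {K X V₁ V₂ V : Type*} [CommSemiring K] [AddCommGroup V₁] [Module K V₁]
  [AddCommGroup V₂] [Module K V₂] [AddCommGroup V] [Module K V]

theorem externalProduct_alternatize {m n : ℕ} (μ : V₁ →ₗ[K] V₂ →ₗ[K] V)
    (F : (Fin m → X) → V₁) (G : (Fin n → X) → V₂) :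
    externalProduct μ (alternatize F) (alternatize G) =
      ∑ c : Perm (Fin m) × Perm (Fin n), (Perm.sign (finSumPerm c.1 c.2) : ℤ) •
        fun y => externalProduct μ F G (y ∘ finSumPerm c.1 c.2) := by
  funext y
  simp only [externalProduct, alternatize, Finset.sum_apply, Pi.smul_apply, Function.comp_assoc,
    finSumPerm_comp_castAdd, finSumPerm_comp_natAdd, sign_finSumPerm, Units.val_mul, mul_smul,
    map_sum, map_zsmul, LinearMap.sum_apply, LinearMap.smul_apply, Finset.smul_sum,
    Fintype.sum_prod_type_right]
  exact Fintype.sum_congr _ _ fun b => Fintype.sum_congr _ _ fun a => smul_comm _ _ _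

theorem alternatize_externalProduct_alternatize {m n : ℕ} (μ : V₁ →ₗ[K] V₂ →ₗ[K] V)
    (F : (Fin m → X) → V₁) (G : (Fin n → X) → V₂) :
    alternatize (externalProduct μ (alternatize F) (alternatize G)) =
      (m.factorial * n.factorial) • alternatize (externalProduct μ F G) := by
  rw [externalProduct_alternatize, alternatize_sum_sign_smul_comp_perm, Fintype.card_prod,
    Fintype.card_perm, Fintype.card_perm, Fintype.card_fin, Fintype.card_fin]

end AlternatizeExternalProduct

section ConsecutivePairs

open Equiv

variable {X N V : Type*}

/-- Applies `R` to consecutive pairs: `(x₁,…,x_{2p}) ↦ (R(x₁,x₂),…,R(x_{2p-1},x_{2p}))`. The arity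
`a` is a separate argument because both `2 * (p + q)` and `2 * p + 2 * q` occur. -/
def mapPairs {p a : ℕ} (ha : a = 2 * p) (R : X → X → N) (x : Fin a → X) (s : Fin p) : N :=
  R (x ⟨2 * s, by omega⟩) (x ⟨2 * s + 1, by omega⟩)

theorem mapPairs_comp_castAdd {p q : ℕ} (R : X → X → N) (x : Fin (2 * p + 2 * q) → X) :
    mapPairs (mul_add 2 p q).symm R x ∘ Fin.castAdd q =
      mapPairs rfl R (x ∘ Fin.castAdd (2 * q)) :=
  rfl

theorem mapPairs_comp_natAdd {p q : ℕ} (R : X → X → N) (x : Fin (2 * p + 2 * q) → X) :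
    mapPairs (mul_add 2 p q).symm R x ∘ Fin.natAdd p =
      mapPairs rfl R (x ∘ Fin.natAdd (2 * p)) := by
  funext s
  simp only [mapPairs, Function.comp_apply, Fin.natAdd, mul_add, add_assoc]

theorem externalProduct_comp_mapPairs {K V₁ V₂ : Type*} [CommSemiring K] [AddCommMonoid V₁]
    [Module K V₁] [AddCommMonoid V₂] [Module K V₂] [AddCommMonoid V] [Module K V] {p q : ℕ}
    (μ : V₁ →ₗ[K] V₂ →ₗ[K] V) (f : (Fin p → N) → V₁) (h : (Fin q → N) → V₂) (R : X → X → N) :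
    externalProduct μ f h ∘ mapPairs (mul_add 2 p q).symm R =
      externalProduct μ (f ∘ mapPairs rfl R) (h ∘ mapPairs rfl R) := by
  funext x
  simp only [externalProduct, Function.comp_apply, mapPairs_comp_castAdd, mapPairs_comp_natAdd]

/-- The permutation of `{1,…,2p}` that permutes the `p` consecutive pairs by `ρ`, preserving the
order within each pair. Under `mapPairs` it becomes `ρ` itself. -/
def pairPerm {p a : ℕ} (ha : a = 2 * p) (ρ : Perm (Fin p)) : Perm (Fin a) :=
  (finProdFinEquiv.trans (finCongr (by omega))).permCongr (prodCongrLeft fun _ : Fin 2 => ρ)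

theorem sign_pairPerm {p a : ℕ} (ha : a = 2 * p) (ρ : Perm (Fin p)) :
    Perm.sign (pairPerm ha ρ) = 1 := by
  simp [pairPerm, Perm.sign_permCongr, Perm.sign_prodCongrLeft]

theorem mapPairs_comp_pairPerm {p a : ℕ} (ha : a = 2 * p) (R : X → X → N) (ρ : Perm (Fin p))
    (x : Fin a → X) :
    mapPairs ha R (x ∘ pairPerm ha ρ) = mapPairs ha R x ∘ ρ := by
  have pairPerm_apply (s : Fin p) (k : Fin 2) :
      pairPerm ha ρ ⟨k + 2 * s, by omega⟩ = ⟨k + 2 * ρ s, by omega⟩ := by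
    have pair_index (s : Fin p) : (⟨k + 2 * s, by omega⟩ : Fin a) =
        finProdFinEquiv.trans (finCongr (by omega)) (s, k) := rfl
    rw [pair_index, pair_index, pairPerm, permCongr_apply, symm_apply_apply, prodCongrLeft_apply]
  funext s
  have first := pairPerm_apply s 0
  have second := pairPerm_apply s 1
  simp only [Fin.val_zero, Fin.val_one, zero_add, add_comm 1] at first second
  simp only [mapPairs, Function.comp_apply, first, second]

theorem alternatize_sum_perm_comp_mapPairs [AddCommGroup V] {p a : ℕ} (ha : a = 2 * p)
    (R : X → X → N) (F : (Fin p → N) → V) :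
    alternatize ((fun y => ∑ ρ : Perm (Fin p), F (y ∘ ρ)) ∘ mapPairs ha R) =
      p.factorial • alternatize (F ∘ mapPairs ha R) := by
  have absorbed := alternatize_sum_sign_smul_comp_perm (F ∘ mapPairs ha R) (pairPerm ha)
  rw [Fintype.card_perm, Fintype.card_fin] at absorbed
  rw [← absorbed]
  congr 1
  funext x
  simp [sign_pairPerm, mapPairs_comp_pairPerm]

end ConsecutivePairs

section ChernWeil

variable {K g gh V : Type*} [Field K] [LieRing g] [LieAlgebra K g] [LieRing gh] [LieAlgebra K gh]
  [AddCommGroup V] [Module K V]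

theorem chernWeilF_eq_alternatize (π : gh →ₗ⁅K⁆ g) {p a : ℕ} (ha : a = 2 * p)
    (σ : g →ₗ[K] gh) (hσ : ∀ x, π (σ x) = x) (f : (Fin p → π.ker) → V) :
    chernWeilF π p a ha σ hσ f =
      ((2 : K) ^ p)⁻¹ • alternatize (f ∘ mapPairs ha (curvKer π σ hσ)) :=
  rfl

theorem wedgeC_eq_alternatize {X : Type*} {p q : ℕ} (mV : V →ₗ[K] V →ₗ[K] V)
    (α : (Fin p → X) → V) (β : (Fin q → X) → V) :
    wedgeC (K := K) p q (p + q) rfl (fun v w => mV v w) α β =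
      ((p.factorial * q.factorial : ℕ) : K)⁻¹ • alternatize (externalProduct mV α β) :=
  rfl

theorem veeC_eq_sum_perm {N : Type*} {p q : ℕ} (mV : V →ₗ[K] V →ₗ[K] V)
    (f : (Fin p → N) → V) (h : (Fin q → N) → V) :
    veeC (K := K) p q (fun v w => mV v w) f h =
      ((p.factorial * q.factorial : ℕ) : K)⁻¹ •
        fun y => ∑ ρ : Equiv.Perm (Fin (p + q)), externalProduct mV f h (y ∘ ρ) :=
  rfl

theorem chernWeilF_veeC (mV : V →ₗ[K] V →ₗ[K] V) (π : gh →ₗ⁅K⁆ g) (σ : g →ₗ[K] gh)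
    (hσ : ∀ x, π (σ x) = x) {p q a : ℕ} (ha : a = 2 * (p + q)) (f : (Fin p → π.ker) → V)
    (h : (Fin q → π.ker) → V) :
    chernWeilF π (p + q) a ha σ hσ (veeC (K := K) p q (fun v w => mV v w) f h) =
      (((p + q).factorial : K) / (p.factorial * q.factorial)) •
        chernWeilF π (p + q) a ha σ hσ (externalProduct mV f h) := by
  rw [chernWeilF_eq_alternatize, chernWeilF_eq_alternatize, veeC_eq_sum_perm, Pi.smul_comp,
    alternatize_smul, alternatize_sum_perm_comp_mapPairs, ← Nat.cast_smul_eq_nsmul K, smul_smul,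
    smul_smul, smul_smul]
  congr 1
  push_cast
  ring

theorem wedgeC_chernWeilF (mV : V →ₗ[K] V →ₗ[K] V) (π : gh →ₗ⁅K⁆ g) (σ : g →ₗ[K] gh)
    (hσ : ∀ x, π (σ x) = x) {p q : ℕ} (hp : ((2 * p).factorial : K) ≠ 0)
    (hq : ((2 * q).factorial : K) ≠ 0) (f : (Fin p → π.ker) → V) (h : (Fin q → π.ker) → V) :
    wedgeC (K := K) (2 * p) (2 * q) (2 * p + 2 * q) rfl (fun v w => mV v w)
        (chernWeilF π p (2 * p) rfl σ hσ f) (chernWeilF π q (2 * q) rfl σ hσ h) =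
      chernWeilF π (p + q) (2 * p + 2 * q) (mul_add 2 p q).symm σ hσ
        (externalProduct mV f h) := by
  have hpq : (((2 * p).factorial * (2 * q).factorial : ℕ) : K) ≠ 0 := by
    exact_mod_cast mul_ne_zero hp hq
  rw [wedgeC_eq_alternatize, inv_smul_eq_iff₀ hpq]
  simp only [chernWeilF_eq_alternatize]
  rw [externalProduct_smul_smul, alternatize_smul, alternatize_externalProduct_alternatize,
    externalProduct_comp_mapPairs, ← mul_inv, ← pow_add, ← Nat.cast_smul_eq_nsmul K, smul_comm]

theorem chernWeil_multiplicative_general (mV : V →ₗ[K] V →ₗ[K] V) (π : gh →ₗ⁅K⁆ g)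
    (σ : g →ₗ[K] gh) (hσ : ∀ x, π (σ x) = x) (p q : ℕ)
    (hp : ((2 * p).factorial : K) ≠ 0) (hq : ((2 * q).factorial : K) ≠ 0)
    (f : (Fin p → π.ker) → V) (h : (Fin q → π.ker) → V) :
    chernWeilF π (p + q) (2 * p + 2 * q) (mul_add 2 p q).symm σ hσ
        (veeC (K := K) p q (fun v w => mV v w) f h) =
      (((p + q).factorial : K) / ((p.factorial : K) * (q.factorial : K))) •
        wedgeC (K := K) (2 * p) (2 * q) (2 * p + 2 * q) rfl (fun v w => mV v w)
          (chernWeilF π p (2 * p) rfl σ hσ f) (chernWeilF π q (2 * q) rfl σ hσ h) := by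
  rw [chernWeilF_veeC, wedgeC_chernWeilF mV π σ hσ hp hq]

end ChernWeil

/-- **Multiplicativity of the Chern–Weil map** (cochain level, part (b) of Lecomte's
theorem): `(f ∨_{m_V} h)_σ = ((p+q)!/(p!·q!)) · (f_σ ∧_{m_V} h_σ)`. -/
theorem chernWeil_multiplicative {K g gh V : Type*} [Field K] [CharZero K]
    [LieRing g] [LieAlgebra K g] [LieRing gh] [LieAlgebra K gh]
    [AddCommGroup V] [Module K V]
    (mV : V →ₗ[K] V →ₗ[K] V)
    (π : gh →ₗ⁅K⁆ g) (hπ : Function.Surjective π)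
    (σ : g →ₗ[K] gh) (hσ : ∀ x, π (σ x) = x)
    (p q : ℕ)
    (f : MultilinearMap K (fun _ : Fin p => π.ker) V)
    (h : MultilinearMap K (fun _ : Fin q => π.ker) V)
    (hfsym : ∀ (y : Fin p → π.ker) (τ : Equiv.Perm (Fin p)), f (fun i => y (τ i)) = f y)
    (hhsym : ∀ (y : Fin q → π.ker) (τ : Equiv.Perm (Fin q)), h (fun i => y (τ i)) = h y) :
    chernWeilF π (p + q) (2 * p + 2 * q) (by ring) σ hσ
        (veeC (K := K) p q (fun v w => mV v w) ⇑f ⇑h)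
      = (((p + q).factorial : K) / ((p.factorial : K) * (q.factorial : K))) •
          wedgeC (K := K) (2 * p) (2 * q) (2 * p + 2 * q) rfl (fun v w => mV v w)
            (chernWeilF π p (2 * p) rfl σ hσ ⇑f)
            (chernWeilF π q (2 * q) rfl σ hσ ⇑h) :=
  chernWeil_multiplicative_general mV π σ hσ p q (Nat.cast_ne_zero.mpr (Nat.factorial_ne_zero _))
    (Nat.cast_ne_zero.mpr (Nat.factorial_ne_zero _)) f h
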